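/- Let ρ > 0 and σ > 0, define m(λ) = ρσ · ∫_0^∞ ln(1 + sinh²(λ/(2ρ))·erfc(η)·erfc(−η)) dη and φ_q(ξ) = sup_{λ∈ℝ} (λξ − m(λ)). Then lim_{ξ→0} φ_q(ξ)/ξ² = ρ√(2π)/(2σ). Equivalently, the quenched variance of the rescaled tracer position is σ/(ρ√(2π)), smaller by a factor √2 than the annealed variance σ/(ρ√π). -/

import Mathlib

open MeasureTheory Real Filter Topology

/-- The complementary error function `erfc(x) = (2/√π) ∫_x^∞ e^{−u²} du`. -/
noncomputable def erfc (x : ℝ) : ℝ := (2 / Real.sqrt π) * ∫ u in Set.Ioi x, Real.exp (-u ^ 2)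

/-- The quenched cumulant generating function per unit `√t`:
`m(λ) = ρσ ∫_0^∞ ln(1 + sinh²(λ/(2ρ))·erfc(η)·erfc(−η)) dη`. -/
noncomputable def mq (ρ σ l : ℝ) : ℝ :=
  ρ * σ * ∫ η in Set.Ioi (0 : ℝ),
    Real.log (1 + Real.sinh (l / (2 * ρ)) ^ 2 * erfc η * erfc (-η))

/-- The quenched large deviation function `φ_q(ξ) = sup_λ (λξ − m(λ))`. -/
noncomputable def φq (ρ σ ξ : ℝ) : ℝ := ⨆ l : ℝ, (l * ξ - mq ρ σ l)


/-- The partial Gaussian integral. -/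
noncomputable def gE (x : ℝ) : ℝ := ∫ u in (0 : ℝ)..x, Real.exp (-u ^ 2)

lemma gint : Integrable (fun u : ℝ => Real.exp (-u ^ 2)) := by
  simpa using integrable_exp_neg_mul_sq (b := 1) one_pos

lemma gcont : Continuous (fun u : ℝ => Real.exp (-u ^ 2)) := by fun_prop

lemma gI0 : ∫ u in Set.Ioi (0 : ℝ), Real.exp (-u ^ 2) = √π / 2 := by
  simpa using integral_gaussian_Ioi 1

lemma gE_deriv (x : ℝ) : HasDerivAt gE (Real.exp (-x ^ 2)) x :=
  intervalIntegral.integral_hasDerivAt_right (gcont.intervalIntegrable _ _)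
    (gcont.stronglyMeasurableAtFilter _ _) gcont.continuousAt

lemma gE_cont : Continuous gE :=
  continuous_iff_continuousAt.2 fun x => (gE_deriv x).continuousAt

lemma gE_neg (x : ℝ) : gE (-x) = - gE x := by
  unfold gE
  have h := intervalIntegral.integral_comp_neg (fun u : ℝ => Real.exp (-u ^ 2)) (a := 0) (b := x)
  simp only [neg_sq, neg_zero] at h
  rw [h, intervalIntegral.integral_symm]

lemma gE_add (x : ℝ) : gE x + ∫ u in Set.Ioi x, Real.exp (-u ^ 2) = √π / 2 := by
  rw [← gI0]
  exact intervalIntegral.integral_interval_add_Ioi gint.integrableOn gint.integrableOn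

lemma erfc_eq (x : ℝ) : erfc x = 1 - 2 / √π * gE x := by
  have h := gE_add x
  have hp : √π ≠ 0 := by positivity
  unfold erfc
  rw [show ∫ u in Set.Ioi x, Real.exp (-u ^ 2) = √π / 2 - gE x by linarith]
  field_simp

lemma gE_tendsto : Tendsto gE atTop (𝓝 (√π / 2)) := by
  rw [← gI0]
  exact intervalIntegral_tendsto_integral_Ioi 0 gint.integrableOn tendsto_id

lemma gE_nonneg {x : ℝ} (hx : 0 ≤ x) : 0 ≤ gE x :=
  intervalIntegral.integral_nonneg hx fun u _ => (Real.exp_pos _).le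

lemma gE_le (x : ℝ) : gE x ≤ √π / 2 := by
  have h := gE_add x
  have : 0 ≤ ∫ u in Set.Ioi x, Real.exp (-u ^ 2) :=
    integral_nonneg fun u => (Real.exp_pos _).le
  linarith

/-- The profile. -/
noncomputable def gg (x : ℝ) : ℝ := 1 - 4 / π * gE x ^ 2

lemma gg_eq (x : ℝ) : erfc x * erfc (-x) = gg x := by
  rw [erfc_eq, erfc_eq, gE_neg, gg]
  have hs : √π ^ 2 = π := Real.sq_sqrt Real.pi_pos.le
  have hp : √π ≠ 0 := by positivity
  have e : 4 / π = (2 / √π) ^ 2 := by rw [div_pow, hs]; norm_num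
  rw [e]
  ring

lemma gg_cont : Continuous gg := by
  unfold gg
  have := gE_cont
  fun_prop

lemma gg_le (x : ℝ) : gg x ≤ 1 := by
  unfold gg
  have : 0 ≤ 4 / π * gE x ^ 2 := by positivity
  linarith

lemma gg_fac (x : ℝ) : gg x = 4 / π * ((√π / 2 - gE x) * (√π / 2 + gE x)) := by
  have hs : √π ^ 2 = π := Real.sq_sqrt Real.pi_pos.le
  unfold gg
  have : (√π / 2 - gE x) * (√π / 2 + gE x) = π / 4 - gE x ^ 2 := by
    linear_combination hs / 4
  rw [this]
  have := Real.pi_pos.ne'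
  field_simp

lemma gg_nonneg {x : ℝ} (hx : 0 ≤ x) : 0 ≤ gg x := by
  rw [gg_fac]
  have h1 := gE_le x
  have h2 := gE_nonneg hx
  have : 0 ≤ √π := by positivity
  exact mul_nonneg (by positivity) (mul_nonneg (by linarith) (by linarith))

/-- Antiderivative of the profile. -/
noncomputable def gF (x : ℝ) : ℝ :=
  x * gg x - 4 / π * (gE x * Real.exp (-x ^ 2)) + 2 * √2 / π * gE (√2 * x)

lemma gF_deriv (x : ℝ) : HasDerivAt gF (gg x) x := by
  have hE := gE_deriv x
  have hg : HasDerivAt gg (-(4 / π * (2 * gE x * Real.exp (-x ^ 2)))) x := by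
    have := ((hE.pow 2).const_mul (4 / π)).const_sub 1
    refine (this.congr_deriv ?_)
    simp
  have he : HasDerivAt (fun x : ℝ => Real.exp (-x ^ 2)) (Real.exp (-x ^ 2) * (-(2 * x))) x := by
    have := ((hasDerivAt_pow 2 x).neg).exp
    simpa using this
  have h2 : HasDerivAt (fun x => gE (√2 * x)) (Real.exp (-(√2 * x) ^ 2) * √2) x := by
    have h3 : HasDerivAt (fun x : ℝ => √2 * x) √2 x := by
      simpa using (hasDerivAt_id x).const_mul √2
    exact (gE_deriv (√2 * x)).comp x h3
  have h := (((hasDerivAt_id x).mul hg).sub ((hE.mul he).const_mul (4 / π))).add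
    (h2.const_mul (2 * √2 / π))
  have hs : √(2 : ℝ) ^ 2 = 2 := Real.sq_sqrt (by norm_num)
  have e1 : Real.exp (-(√2 * x) ^ 2) = Real.exp (-x ^ 2) ^ 2 := by
    rw [← Real.exp_nat_mul, mul_pow, hs]; congr 1; push_cast; ring
  refine HasDerivAt.congr_deriv h ?_
  rw [e1]
  simp only [id]
  linear_combination (2 / π * Real.exp (-x ^ 2) ^ 2) * hs

lemma tail_int : Tendsto (fun x : ℝ => x * (√π / 2 - gE x)) atTop (𝓝 0) := by
  have hint : Integrable (fun u : ℝ => u * Real.exp (-u ^ 2)) := by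
    simpa using integrable_mul_exp_neg_mul_sq (b := 1) one_pos
  have ht : Tendsto (fun x : ℝ => ∫ u in Set.Ioi x, u * Real.exp (-u ^ 2)) atTop (𝓝 0) := by
    have h := intervalIntegral_tendsto_integral_Ioi 0 hint.integrableOn tendsto_id
    have h2 := h.const_sub (∫ u in Set.Ioi (0 : ℝ), u * Real.exp (-u ^ 2))
    rw [sub_self] at h2
    refine h2.congr fun x => ?_
    have := intervalIntegral.integral_interval_add_Ioi (a := 0) (b := x)
      hint.integrableOn hint.integrableOn
    simp only [id]
    linarith
  refine tendsto_of_tendsto_of_tendsto_of_le_of_le' tendsto_const_nhds ht ?_ ?_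
  · filter_upwards [eventually_ge_atTop 0] with x hx
    exact mul_nonneg hx (by linarith [gE_le x])
  · filter_upwards [eventually_ge_atTop 0] with x hx
    rw [show √π / 2 - gE x = ∫ u in Set.Ioi x, Real.exp (-u ^ 2) by linarith [gE_add x],
      ← integral_const_mul]
    refine setIntegral_mono_on (gint.integrableOn.const_mul x) hint.integrableOn
      measurableSet_Ioi fun u hu => ?_
    exact mul_le_mul_of_nonneg_right (le_of_lt hu) (Real.exp_pos _).le

lemma gF_tendsto : Tendsto gF atTop (𝓝 √(2 / π)) := by
  have h1 : Tendsto (fun x => x * gg x) atTop (𝓝 0) := by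
    have := (tail_int.mul (gE_tendsto.const_add (√π / 2))).const_mul (4 / π)
    simp only [zero_mul, mul_zero] at this
    refine this.congr fun x => ?_
    rw [gg_fac]; ring
  have he : Tendsto (fun x : ℝ => Real.exp (-x ^ 2)) atTop (𝓝 0) :=
    Real.tendsto_exp_neg_atTop_nhds_zero.comp (tendsto_pow_atTop two_ne_zero)
  have h2 := (gE_tendsto.mul he).const_mul (4 / π)
  have h3 := (gE_tendsto.comp (tendsto_id.const_mul_atTop
    (show (0 : ℝ) < √2 by positivity))).const_mul (2 * √2 / π)
  have h := (h1.sub h2).add h3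
  have e : (0 - 4 / π * (√π / 2 * 0) + 2 * √2 / π * (√π / 2)) = √(2 / π) := by
    rw [Real.sqrt_div (by norm_num)]
    have hs : √π ^ 2 = π := Real.sq_sqrt Real.pi_pos.le
    have hp : √π ≠ 0 := by positivity
    field_simp
    linear_combination (2 * √2) * hs
  rw [e] at h
  exact h

lemma gg_int : IntegrableOn gg (Set.Ioi 0) :=
  integrableOn_Ioi_deriv_of_nonneg' (fun x _ => gF_deriv x)
    (fun x hx => gg_nonneg (le_of_lt hx)) gF_tendsto

lemma gg_val : ∫ x in Set.Ioi (0 : ℝ), gg x = √(2 / π) := by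
  rw [integral_Ioi_of_hasDerivAt_of_nonneg' (fun x _ => gF_deriv x)
    (fun x hx => gg_nonneg (le_of_lt hx)) gF_tendsto]
  simp [gF, gE]

lemma mq_eq (ρ σ l : ℝ) : mq ρ σ l =
    ρ * σ * ∫ x in Set.Ioi (0 : ℝ), Real.log (1 + Real.sinh (l / (2 * ρ)) ^ 2 * gg x) := by
  unfold mq
  simp only [mul_assoc, gg_eq]

lemma log_int (s : ℝ) (hs : 0 ≤ s) :
    IntegrableOn (fun x => Real.log (1 + s * gg x)) (Set.Ioi 0) := by
  refine Integrable.mono' (gg_int.const_mul s) ?_ ?_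
  · have := gg_cont
    exact (Real.measurable_log.comp (by fun_prop)).aestronglyMeasurable
  · refine (ae_restrict_mem measurableSet_Ioi).mono fun x hx => ?_
    have h0 : 0 ≤ s * gg x := mul_nonneg hs (gg_nonneg (le_of_lt hx))
    rw [Real.norm_eq_abs, abs_of_nonneg (Real.log_nonneg (by linarith))]
    linarith [Real.log_le_sub_one_of_pos (show 0 < 1 + s * gg x by linarith)]

lemma mq_le (ρ σ l : ℝ) (hρ : 0 < ρ) (hσ : 0 < σ) :
    mq ρ σ l ≤ ρ * σ * (Real.sinh (l / (2 * ρ)) ^ 2 * √(2 / π)) := by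
  have hrs : 0 ≤ ρ * σ := by positivity
  rw [mq_eq, ← gg_val]
  refine mul_le_mul_of_nonneg_left ?_ hrs
  rw [← integral_const_mul]
  refine setIntegral_mono_on (log_int _ (sq_nonneg _)) (gg_int.const_mul _)
    measurableSet_Ioi fun x hx => ?_
  have h0 : 0 ≤ Real.sinh (l / (2 * ρ)) ^ 2 * gg x :=
    mul_nonneg (sq_nonneg _) (gg_nonneg (le_of_lt (Set.mem_Ioi.1 hx)))
  linarith [Real.log_le_sub_one_of_pos
    (show 0 < 1 + Real.sinh (l / (2 * ρ)) ^ 2 * gg x by linarith)]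

lemma le_mq (ρ σ l : ℝ) (hρ : 0 < ρ) (hσ : 0 < σ) :
    ρ * σ * (2 * Real.log (Real.cosh (l / (2 * ρ))) * √(2 / π)) ≤ mq ρ σ l := by
  have hrs : 0 ≤ ρ * σ := by positivity
  rw [mq_eq, ← gg_val]
  refine mul_le_mul_of_nonneg_left ?_ hrs
  rw [← integral_const_mul]
  refine setIntegral_mono_on (gg_int.const_mul _) (log_int _ (sq_nonneg _))
    measurableSet_Ioi fun x hx => ?_
  have h0 := gg_nonneg (le_of_lt (Set.mem_Ioi.1 hx))
  have h1 := gg_le x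
  have hc : 0 < Real.cosh (l / (2 * ρ)) ^ 2 := by positivity
  have h := strictConcaveOn_log_Ioi.concaveOn.2 (Set.mem_Ioi.2 one_pos)
    (Set.mem_Ioi.2 hc) (sub_nonneg.2 h1) h0 (by ring)
  simp only [smul_eq_mul, Real.log_one, Real.log_pow, mul_zero, zero_add] at h
  rw [Real.cosh_sq] at h
  push_cast at h
  calc _ = gg x * (2 * Real.log (Real.cosh (l / (2 * ρ)))) := by ring
    _ ≤ _ := h
    _ = _ := by congr 1; ring

lemma log_bd {y : ℝ} (hy : |y| ≤ 1 / 2) :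
    Real.log (1 + y) ≤ y - y ^ 2 / 2 + 2 * |y| ^ 3 := by
  have h := Real.abs_log_sub_add_sum_range_le (x := -y) (by rw [abs_neg]; linarith) 2
  simp only [Finset.sum_range_succ, Finset.sum_range_zero, abs_neg, sub_neg_eq_add] at h
  norm_num at h
  have h2 : |y| ^ 3 / (1 - |y|) ≤ 2 * |y| ^ 3 := by
    rw [div_le_iff₀ (by linarith)]
    have : 0 ≤ |y| ^ 3 := by positivity
    nlinarith
  have := (abs_le.1 h).2
  linarith

lemma legendre_bd (x : ℝ) {y : ℝ} (hy : |y| ≤ 1 / 2) :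
    x * y - Real.log (Real.cosh x) ≤ y ^ 2 / 2 + 2 * |y| ^ 3 := by
  obtain ⟨ha, hb⟩ := abs_le.1 hy
  have hp : 0 < 1 + y := by linarith
  have hq : 0 < 1 - y := by linarith
  have h := strictConcaveOn_log_Ioi.concaveOn.2
    (Set.mem_Ioi.2 (show 0 < Real.exp x / (1 + y) by positivity))
    (Set.mem_Ioi.2 (show 0 < Real.exp (-x) / (1 - y) by positivity))
    (show 0 ≤ (1 + y) / 2 by linarith) (show 0 ≤ (1 - y) / 2 by linarith) (by ring)
  simp only [smul_eq_mul] at h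
  rw [Real.log_div (Real.exp_pos _).ne' hp.ne', Real.log_div (Real.exp_pos _).ne' hq.ne',
    Real.log_exp, Real.log_exp] at h
  have e : (1 + y) / 2 * (Real.exp x / (1 + y)) + (1 - y) / 2 * (Real.exp (-x) / (1 - y))
      = Real.cosh x := by
    rw [Real.cosh_eq]; field_simp
  rw [e] at h
  have h1 := log_bd hy
  have h2 := log_bd (y := -y) (by rwa [abs_neg])
  rw [abs_neg, ← sub_eq_add_neg] at h2
  have h3 := mul_le_mul_of_nonneg_left h1 hp.le
  have h4 := mul_le_mul_of_nonneg_left h2 hq.le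
  nlinarith

lemma pt_bd (ρ σ ξ l : ℝ) (hρ : 0 < ρ) (hσ : 0 < σ)
    (hy : |ξ / (σ * √(2 / π))| ≤ 1 / 2) :
    l * ξ - mq ρ σ l ≤ 2 * ρ * (σ * √(2 / π)) *
      ((ξ / (σ * √(2 / π))) ^ 2 / 2 + 2 * |ξ / (σ * √(2 / π))| ^ 3) := by
  have hB : 0 < σ * √(2 / π) := by positivity
  have h1 := le_mq ρ σ l hρ hσ
  have h2 := mul_le_mul_of_nonneg_left (legendre_bd (l / (2 * ρ)) hy)
    (show 0 ≤ 2 * ρ * (σ * √(2 / π)) by positivity)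
  have e : 2 * ρ * (σ * √(2 / π)) * (l / (2 * ρ) * (ξ / (σ * √(2 / π)))) = l * ξ := by
    field_simp
  rw [mul_sub, e] at h2
  linarith

/-- `lim_{ξ→0} φ_q(ξ)/ξ² = ρ√(2π)/(2σ)`: the quadratic behaviour of the quenched
large deviation function, encoding the quenched variance `σ/(ρ√(2π))`. -/
theorem quenched_ldf_quadratic (ρ σ : ℝ) (hρ : 0 < ρ) (hσ : 0 < σ) :
    Tendsto (fun ξ : ℝ => φq ρ σ ξ / ξ ^ 2) (𝓝[≠] 0)
      (nhds (ρ * Real.sqrt (2 * π) / (2 * σ))) := by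
  have hlim : ρ * Real.sqrt (2 * π) / (2 * σ) = ρ / (σ * √(2 / π)) := by
    rw [Real.sqrt_div (by norm_num), Real.sqrt_mul (by norm_num)]
    have hs : √(2 : ℝ) ^ 2 = 2 := Real.sq_sqrt (by norm_num)
    have hp : √π ≠ 0 := by positivity
    have hp : √(2 : ℝ) ≠ 0 := by positivity
    field_simp
    linarith
  rw [hlim]
  have hpt := fun ξ l => pt_bd ρ σ ξ l hρ hσ
  have hm := fun l => mq_le ρ σ l hρ hσ
  have hB : 0 < σ * √(2 / π) := by positivity
  have hAB : ∀ s, ρ * σ * (s * √(2 / π)) = ρ * (σ * √(2 / π)) * s := fun s => by ring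
  simp only [hAB] at hm
  generalize σ * √(2 / π) = B at *
  have hy0 : Tendsto (fun ξ : ℝ => ξ / B) (𝓝[≠] 0) (𝓝[≠] 0) := by
    refine tendsto_nhdsWithin_iff.2 ⟨?_, ?_⟩
    · have : Continuous (fun ξ : ℝ => ξ / B) := by fun_prop
      simpa using (this.tendsto 0).mono_left nhdsWithin_le_nhds
    · filter_upwards [self_mem_nhdsWithin] with ξ hξ
      exact div_ne_zero hξ hB.ne'
  have hy1 : Tendsto (fun ξ : ℝ => |ξ / B|) (𝓝[≠] 0) (𝓝 0) := by
    simpa using (hy0.mono_right nhdsWithin_le_nhds).abs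
  have hsm : ∀ᶠ ξ in 𝓝[≠] (0 : ℝ), |ξ / B| ≤ 1 / 2 :=
    hy1.eventually (Iic_mem_nhds (by norm_num))
  have hsh : Tendsto (fun y : ℝ => Real.sinh y / y) (𝓝[≠] 0) (𝓝 1) := by
    have h := hasDerivAt_iff_tendsto_slope.1 (Real.hasDerivAt_sinh 0)
    rw [Real.cosh_zero] at h
    refine h.congr fun y => ?_
    simp [slope_def_field]
  have hlow : Tendsto (fun ξ : ℝ => 2 * ρ / B * (1 - (Real.sinh (ξ / B) / (ξ / B)) ^ 2 / 2))
      (𝓝[≠] 0) (𝓝 (ρ / B)) := by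
    have := ((((hsh.comp hy0).pow 2).div_const 2).const_sub 1).const_mul (2 * ρ / B)
    rw [show 2 * ρ / B * (1 - 1 ^ 2 / 2) = ρ / B by ring] at this
    exact this
  have hup : Tendsto (fun ξ : ℝ => 2 * ρ / B * (1 / 2 + 2 * |ξ / B|)) (𝓝[≠] 0) (𝓝 (ρ / B)) := by
    have := ((hy1.const_mul 2).const_add (1 / 2)).const_mul (2 * ρ / B)
    convert this using 2
    ring
  refine tendsto_of_tendsto_of_tendsto_of_le_of_le' hlow hup ?_ ?_
  · filter_upwards [hsm, self_mem_nhdsWithin] with ξ hξ hne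
    have hne : ξ ≠ 0 := hne
    have hξ2 : 0 < ξ ^ 2 := by positivity
    rw [le_div_iff₀ hξ2]
    have hbdd : BddAbove (Set.range fun l => l * ξ - mq ρ σ l) :=
      ⟨_, by rintro _ ⟨l, rfl⟩; exact hpt ξ l hξ⟩
    refine le_trans ?_ (le_ciSup hbdd (2 * ρ * (ξ / B)))
    have h := hm (2 * ρ * (ξ / B))
    rw [show 2 * ρ * (ξ / B) / (2 * ρ) = ξ / B by field_simp] at h
    refine le_trans (le_of_eq ?_) (sub_le_sub_left h _)
    field_simp
  · filter_upwards [hsm, self_mem_nhdsWithin] with ξ hξ hne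
    have hne : ξ ≠ 0 := hne
    have hξ2 : 0 < ξ ^ 2 := by positivity
    rw [div_le_iff₀ hξ2]
    refine (ciSup_le fun l => hpt ξ l hξ).trans (le_of_eq ?_)
    have e : |ξ / B| ^ 3 = (ξ / B) ^ 2 * |ξ / B| := by
      rw [pow_succ, sq_abs]
    rw [e]
    field_simp
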